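/- Let n ≥ 1, α ∈ ℕⁿ a multi-index, and ξ ∈ ℝⁿ. Define ψ_α^ξ(v) = ∏_{j=1}^n φ_{α_j}(v_j + 2iξ_j) for v ∈ ℝⁿ. Then for every v ∈ ℝⁿ, −Δ_v ψ_α^ξ(v) + (|v|²/4 − n/2 + i v·ξ)·ψ_α^ξ(v) = (|α| + |ξ|²)·ψ_α^ξ(v), where |α| = α_1 + ⋯ + α_n. That is, ψ_α^ξ is an eigenfunction of the partially Fourier-transformed free Kramers–Fokker–Planck operator P̂₀(ξ) = −Δ_v + |v|²/4 − n/2 + i v·ξ with eigenvalue |α| + |ξ|². -/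

import Mathlib

/-- The normalized Hermite function `φ_j(z) = (j!·√(2π))^(−1/2)·exp(−z²/4)·F_j(z)`,
extended to an entire function on `ℂ`. -/
noncomputable def hermiteFun (j : ℕ) (z : ℂ) : ℂ :=
  ((((j.factorial : ℝ) * Real.sqrt (2 * Real.pi)) ^ (-(1 : ℝ) / 2) : ℝ) : ℂ) *
    Complex.exp (-z ^ 2 / 4) * Polynomial.aeval z (Polynomial.hermite j)

/-- `ψ_α^ξ(v) = ∏_j φ_{α_j}(v_j + 2iξ_j)`. -/
noncomputable def psiFun {n : ℕ} (α : Fin n → ℕ) (ξ : Fin n → ℝ) (v : Fin n → ℝ) : ℂ :=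
  ∏ j, hermiteFun (α j) ((v j : ℂ) + 2 * Complex.I * (ξ j : ℂ))

open Polynomial in
theorem hermite_ode (j : ℕ) :
    derivative (derivative (hermite j)) - X * derivative (hermite j) + (j : ℤ[X]) * hermite j = 0 := by
  induction j with
  | zero => simp
  | succ k ih =>
    have h1 : derivative (hermite (k+1)) = ((k : ℤ[X]) + 1) * hermite k := by
      rw [hermite_succ]
      simp only [derivative_sub, derivative_mul, derivative_X]
      linear_combination -ih
    rw [h1]
    simp only [derivative_mul, derivative_add, derivative_natCast, derivative_one]
    rw [hermite_succ]
    push_cast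
    ring

open Polynomial in
theorem hasDerivAt_gaussPoly (c : ℂ) (p : ℤ[X]) (a : ℂ) (x : ℝ) :
    HasDerivAt (fun t : ℝ => c * Complex.exp (-((t : ℂ) + a) ^ 2 / 4) * aeval ((t : ℂ) + a) p)
      (c * Complex.exp (-((x : ℂ) + a) ^ 2 / 4) * (aeval ((x : ℂ) + a) (derivative p)
        - ((x : ℂ) + a) / 2 * aeval ((x : ℂ) + a) p)) x := by
  have h0 : HasDerivAt (fun t : ℝ => (t : ℂ) + a) 1 x := by
    simpa using (Complex.ofRealCLM.hasDerivAt (x := x)).add_const a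
  have h1 : HasDerivAt (fun z : ℂ => c * Complex.exp (-z ^ 2 / 4) * aeval z p)
      (c * Complex.exp (-((x : ℂ) + a) ^ 2 / 4) * (aeval ((x : ℂ) + a) (derivative p)
        - ((x : ℂ) + a) / 2 * aeval ((x : ℂ) + a) p)) ((x : ℂ) + a) := by
    have h2 := (((((hasDerivAt_id ((x : ℂ) + a)).pow 2).neg.div_const 4).cexp).const_mul c).mul
      (p.hasDerivAt_aeval ((x : ℂ) + a))
    refine h2.congr_deriv ?_
    simp only [id, Pi.pow_apply, Pi.neg_apply]
    push_cast
    ring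
  have h3 := HasDerivAt.comp x h1 h0
  rw [mul_one] at h3
  exact h3

open Polynomial in
theorem hermiteFun_deriv (j : ℕ) (a : ℂ) :
    Differentiable ℝ (fun t : ℝ => hermiteFun j ((t : ℂ) + a)) ∧
    Differentiable ℝ (deriv (fun t : ℝ => hermiteFun j ((t : ℂ) + a))) ∧
    ∀ x : ℝ, deriv (deriv (fun t : ℝ => hermiteFun j ((t : ℂ) + a))) x =
      (((x : ℂ) + a) ^ 2 / 4 - 1 / 2 - j) * hermiteFun j ((x : ℂ) + a) := by
  unfold hermiteFun
  set c : ℂ := ((((j.factorial : ℝ) * Real.sqrt (2 * Real.pi)) ^ (-(1 : ℝ) / 2) : ℝ) : ℂ)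
  have hd := hasDerivAt_gaussPoly c (hermite j) a
  have hd' := hasDerivAt_gaussPoly c (derivative (hermite j)) a
  have hX := hasDerivAt_gaussPoly c (X * hermite j) a
  have e : deriv (fun t : ℝ => c * Complex.exp (-((t : ℂ) + a) ^ 2 / 4) *
      aeval ((t : ℂ) + a) (hermite j)) = fun t : ℝ =>
      c * Complex.exp (-((t : ℂ) + a) ^ 2 / 4) * aeval ((t : ℂ) + a) (derivative (hermite j))
      - (1/2) * (c * Complex.exp (-((t : ℂ) + a) ^ 2 / 4) *
        aeval ((t : ℂ) + a) (X * hermite j)) := by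
    funext t
    rw [(hd t).deriv]
    simp only [map_mul, aeval_X]
    ring
  have h2 := fun x => (hd' x).sub ((hX x).const_mul (1/2 : ℂ))
  refine ⟨fun x => (hd x).differentiableAt, ?_, ?_⟩
  · rw [e]; exact fun x => (h2 x).differentiableAt
  · intro x
    rw [e]
    refine (h2 x).deriv.trans ?_
    have ho := congrArg (aeval ((x : ℂ) + a)) (hermite_ode j)
    simp only [map_add, map_sub, map_mul, aeval_X, map_natCast, map_zero, derivative_mul,
      derivative_X, map_one] at ho ⊢
    linear_combination (c * Complex.exp (-((x : ℂ) + a) ^ 2 / 4)) * ho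

theorem fderiv_prod_single {n : ℕ} (g : Fin n → ℝ → ℂ) (hg : ∀ i, Differentiable ℝ (g i))
    (j : Fin n) (w : Fin n → ℝ) :
    fderiv ℝ (fun w : Fin n → ℝ => ∏ i, g i (w i)) w (Pi.single j 1) =
      ∏ i, Function.update g j (deriv (g j)) i (w i) := by
  have h : ∀ i ∈ Finset.univ, HasFDerivAt (fun w : Fin n → ℝ => g i (w i))
      ((ContinuousLinearMap.toSpanSingleton ℝ (deriv (g i) (w i))).comp
        (ContinuousLinearMap.proj (R := ℝ) (φ := fun _ : Fin n => ℝ) i)) w := by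
    intro i _
    exact HasFDerivAt.comp w (hg i (w i)).hasDerivAt.hasFDerivAt
      (ContinuousLinearMap.proj (R := ℝ) (φ := fun _ : Fin n => ℝ) i).hasFDerivAt
  rw [(HasFDerivAt.finsetProd h).fderiv]
  simp only [ContinuousLinearMap.sum_apply, ContinuousLinearMap.smul_apply,
    ContinuousLinearMap.comp_apply, ContinuousLinearMap.proj_apply,
    ContinuousLinearMap.toSpanSingleton_apply]
  rw [Finset.sum_eq_single j]
  · rw [← Finset.mul_prod_erase Finset.univ _ (Finset.mem_univ j)]
    simp only [Pi.single_eq_same, one_smul, Function.update_self, smul_eq_mul]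
    rw [mul_comm]
    congr 1
    refine Finset.prod_congr rfl fun i hi => ?_
    rw [Function.update_of_ne (Finset.ne_of_mem_erase hi)]
  · intro b _ hb
    simp [Pi.single_eq_of_ne hb]
  · simp

/-- `ψ_α^ξ` is an eigenfunction of `P̂₀(ξ) = −Δ_v + |v|²/4 − n/2 + i v·ξ`
with eigenvalue `|α| + |ξ|²`. -/
theorem stmt_8 (n : ℕ) (hn : 1 ≤ n) (α : Fin n → ℕ) (ξ : Fin n → ℝ) :
    ∀ v : Fin n → ℝ,
      -(∑ j, fderiv ℝ (fun w => fderiv ℝ (psiFun α ξ) w (Pi.single j 1)) v (Pi.single j 1))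
        + (((∑ j, (v j) ^ 2 : ℝ) : ℂ) / 4 - (n : ℂ) / 2
            + Complex.I * ((∑ j, v j * ξ j : ℝ) : ℂ)) * psiFun α ξ v =
      (((∑ j, α j : ℕ) : ℂ) + ((∑ j, (ξ j) ^ 2 : ℝ) : ℂ)) * psiFun α ξ v := by
  intro v
  set g : Fin n → ℝ → ℂ := fun i t => hermiteFun (α i) ((t : ℂ) + 2 * Complex.I * (ξ i : ℂ)) with hgdef
  have hg := fun i => hermiteFun_deriv (α i) (2 * Complex.I * (ξ i : ℂ))
  have hpsi : psiFun α ξ = fun w => ∏ i, g i (w i) := rfl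
  have key : ∀ j, fderiv ℝ (fun w => fderiv ℝ (psiFun α ξ) w (Pi.single j 1)) v (Pi.single j 1)
      = (((v j : ℂ) + 2 * Complex.I * (ξ j : ℂ)) ^ 2 / 4 - 1 / 2 - α j) * psiFun α ξ v := by
    intro j
    have e1 : (fun w => fderiv ℝ (psiFun α ξ) w (Pi.single j 1)) =
        fun w => ∏ i, Function.update g j (deriv (g j)) i (w i) := by
      funext w
      rw [hpsi]
      exact fderiv_prod_single g (fun i => (hg i).1) j w
    rw [e1, fderiv_prod_single]
    · rw [hpsi]
      simp only
      rw [← Finset.mul_prod_erase Finset.univ _ (Finset.mem_univ j),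
        ← Finset.mul_prod_erase Finset.univ (fun i => g i (v i)) (Finset.mem_univ j)]
      simp only [Function.update_self, Function.update_idem]
      rw [← mul_assoc]
      congr 1
      · exact (hg j).2.2 (v j)
      · refine Finset.prod_congr rfl fun i hi => ?_
        rw [Function.update_of_ne (Finset.ne_of_mem_erase hi)]
    · intro i
      by_cases h : i = j
      · subst h
        rw [Function.update_self]
        exact (hg i).2.1
      · rw [Function.update_of_ne h]
        exact (hg i).1
  simp only [key]
  rw [← Finset.sum_mul]
  have hs : ∑ j, (((v j : ℂ) + 2 * Complex.I * (ξ j : ℂ)) ^ 2 / 4 - 1 / 2 - α j) =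
      (∑ j, (v j : ℂ) ^ 2) / 4 - (n : ℂ) / 2 + Complex.I * (∑ j, (v j : ℂ) * ξ j)
        - (∑ j, (α j : ℂ)) - ∑ j, (ξ j : ℂ) ^ 2 := by
    have hn' : (n : ℂ) / 2 = ∑ _j : Fin n, (1 / 2 : ℂ) := by simp; ring
    rw [hn', Finset.sum_div, Finset.mul_sum, ← Finset.sum_sub_distrib, ← Finset.sum_add_distrib,
      ← Finset.sum_sub_distrib, ← Finset.sum_sub_distrib]
    refine Finset.sum_congr rfl fun j _ => ?_
    linear_combination (ξ j : ℂ) ^ 2 * Complex.I_sq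
  rw [hs]
  push_cast
  ring
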